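/- Let X and Y be real random variables whose joint law has a density f_XY on ℝ², with strictly positive marginal densities f_X, f_Y and marginal CDFs F_X, F_Y, and define the copula density c(u,v) = f_XY(F_X^{-1}(u), F_Y^{-1}(v)) / ( f_X(F_X^{-1}(u)) · f_Y(F_Y^{-1}(v)) ) on (0,1)². If the mutual information MI(X,Y) = E[ log( f_XY(X,Y) / (f_X(X) f_Y(Y)) ) ] exists (the integrand is integrable with respect to the joint law), then MI(X,Y) = ∫_{(0,1)²} c(u,v) log c(u,v) du dv, i.e., the mutual information equals the negative differential entropy of the copula density. -/

import Mathlib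

open MeasureTheory Set

noncomputable section

/-!
The joint law of `(X, Y)` has density `r = f_XY / (f_X f_Y)` with respect to the product of the
marginal laws, so `E[log r(X, Y)]` is the integral of `r log r` against that product. Each marginal
law is the image of the uniform measure on `(0, 1)` under the inverse CDF, and `c` is `r` composed
with the two inverse CDFs, so changing variables turns this integral into that of `c log c` over
the unit square. Zeros of `f_X` and `f_Y` are harmless: `f_XY` vanishes almost everywhere above
them.
-/

open ProbabilityTheory

section Density

variable {Ω α β : Type*} [MeasurableSpace Ω] [MeasurableSpace α] [MeasurableSpace β]
  {P : Measure Ω} {μ : Measure α} {ν : Measure β}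

theorem ae_comp_pos_of_map_eq_withDensity_ofReal {X : Ω → α} (hX : AEMeasurable X P)
    {f : α → ℝ} (hf : Measurable f)
    (hlaw : P.map X = μ.withDensity fun x => ENNReal.ofReal (f x)) :
    ∀ᵐ ω ∂P, 0 < f (X ω) := by
  refine ae_of_ae_map (p := fun x => 0 < f x) hX ?_
  rw [hlaw, ae_withDensity_iff hf.ennreal_ofReal]
  exact .of_forall fun x hx => ENNReal.ofReal_pos.1 (pos_iff_ne_zero.2 hx)

theorem ae_pos_and_pos_of_joint_density_pos {X : Ω → α} {Y : Ω → β}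
    (hX : AEMeasurable X P) (hY : AEMeasurable Y P)
    {f : α × β → ℝ} {g : α → ℝ} {h : β → ℝ}
    (hf : Measurable f) (hg : Measurable g) (hh : Measurable h)
    (hjoint : P.map (fun ω => (X ω, Y ω)) = (μ.prod ν).withDensity fun p => ENNReal.ofReal (f p))
    (hlawX : P.map X = μ.withDensity fun x => ENNReal.ofReal (g x))
    (hlawY : P.map Y = ν.withDensity fun y => ENNReal.ofReal (h y)) :
    ∀ᵐ p ∂μ.prod ν, 0 < f p → 0 < g p.1 ∧ 0 < h p.2 := by
  have hpos : ∀ᵐ p ∂P.map (fun ω => (X ω, Y ω)), 0 < g p.1 ∧ 0 < h p.2 := by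
    rw [ae_map_iff (hX.prodMk hY) (by measurability)]
    exact (ae_comp_pos_of_map_eq_withDensity_ofReal hX hg hlawX).and
      (ae_comp_pos_of_map_eq_withDensity_ofReal hY hh hlawY)
  rw [hjoint, ae_withDensity_iff hf.ennreal_ofReal] at hpos
  filter_upwards [hpos] with p hp hfp using hp (ENNReal.ofReal_pos.2 hfp).ne'

theorem map_prodMk_eq_withDensity_div [SFinite μ] [SFinite ν] {X : Ω → α} {Y : Ω → β}
    (hX : AEMeasurable X P) (hY : AEMeasurable Y P)
    {f : α × β → ℝ} {g : α → ℝ} {h : β → ℝ}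
    (hf : Measurable f) (hg : Measurable g) (hh : Measurable h)
    (hjoint : P.map (fun ω => (X ω, Y ω)) = (μ.prod ν).withDensity fun p => ENNReal.ofReal (f p))
    (hlawX : P.map X = μ.withDensity fun x => ENNReal.ofReal (g x))
    (hlawY : P.map Y = ν.withDensity fun y => ENNReal.ofReal (h y)) :
    P.map (fun ω => (X ω, Y ω)) =
      ((P.map X).prod (P.map Y)).withDensity
        fun p => ENNReal.ofReal (f p / (g p.1 * h p.2)) := by
  rw [hjoint, hlawX, hlawY, prod_withDensity hg.ennreal_ofReal hh.ennreal_ofReal,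
    ← withDensity_mul _ (by fun_prop) (by fun_prop)]
  refine withDensity_congr_ae ?_
  filter_upwards [ae_pos_and_pos_of_joint_density_pos hX hY hf hg hh hjoint hlawX hlawY] with p hp
  by_cases hgh : 0 < g p.1 ∧ 0 < h p.2
  · have hgh_pos := mul_pos hgh.1 hgh.2
    rw [Pi.mul_apply, ← ENNReal.ofReal_mul hgh.1.le, ← ENNReal.ofReal_mul hgh_pos.le,
      mul_div_cancel₀ _ hgh_pos.ne']
  · have hf_zero : ENNReal.ofReal (f p) = 0 :=
      ENNReal.ofReal_of_nonpos (not_lt.1 fun hfp => hgh (hp hfp))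
    have hgh_zero : ENNReal.ofReal (g p.1) * ENNReal.ofReal (h p.2) = 0 := by
      simpa only [mul_eq_zero, ENNReal.ofReal_eq_zero, not_and_or, not_lt] using hgh
    rw [Pi.mul_apply, hf_zero, hgh_zero, zero_mul]

variable {E : Type*} [NormedAddCommGroup E] [NormedSpace ℝ E]

theorem integrable_withDensity_ofReal_iff {r : α → ℝ} (hr : Measurable r)
    (hr_nonneg : ∀ x, 0 ≤ r x) {φ : α → E} :
    Integrable φ (μ.withDensity fun x => ENNReal.ofReal (r x)) ↔
      Integrable (fun x => r x • φ x) μ := by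
  simp only [integrable_withDensity_iff_integrable_smul' hr.ennreal_ofReal
    (.of_forall fun _ => ENNReal.ofReal_lt_top), ENNReal.toReal_ofReal (hr_nonneg _)]

theorem integral_withDensity_ofReal {r : α → ℝ} (hr : Measurable r)
    (hr_nonneg : ∀ x, 0 ≤ r x) (φ : α → E) :
    ∫ x, φ x ∂μ.withDensity (fun x => ENNReal.ofReal (r x)) = ∫ x, r x • φ x ∂μ := by
  simp only [integral_withDensity_eq_integral_toReal_smul hr.ennreal_ofReal
    (.of_forall fun _ => ENNReal.ofReal_lt_top), ENNReal.toReal_ofReal (hr_nonneg _)]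

end Density

section ChangeOfVariables

theorem prod_map_eq_map_prodMap_of_aemeasurable {α β γ δ : Type*}
    [MeasurableSpace α] [MeasurableSpace β] [MeasurableSpace γ] [MeasurableSpace δ]
    {μ : Measure α} {ν : Measure β} [SFinite μ] [SFinite ν] {f : α → γ} {g : β → δ}
    (hf : AEMeasurable f μ) (hg : AEMeasurable g ν) :
    (μ.map f).prod (ν.map g) = (μ.prod ν).map (Prod.map f g) := by
  have hae : Prod.map (hf.mk f) (hg.mk g) =ᵐ[μ.prod ν] Prod.map f g := by
    filter_upwards [Measure.quasiMeasurePreserving_fst.ae hf.ae_eq_mk,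
      Measure.quasiMeasurePreserving_snd.ae hg.ae_eq_mk] with p hfp hgp
    exact Prod.ext hfp.symm hgp.symm
  rw [Measure.map_congr hf.ae_eq_mk, Measure.map_congr hg.ae_eq_mk,
    Measure.map_prod_map _ _ hf.measurable_mk hg.measurable_mk, Measure.map_congr hae]

variable {Ω Ω' α : Type*} [MeasurableSpace Ω] [MeasurableSpace Ω'] [MeasurableSpace α]
  {P : Measure Ω} {ρ : Measure Ω'} {Z : Ω → α} {T : Ω' → α} {r : α → ℝ}

theorem integrable_log_comp_iff_integrable_mul_log_comp (hZ : AEMeasurable Z P)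
    (hT : AEMeasurable T ρ) (hr : Measurable r) (hr_nonneg : ∀ x, 0 ≤ r x)
    (hlaw : P.map Z = (ρ.map T).withDensity fun x => ENNReal.ofReal (r x)) :
    Integrable (fun ω => Real.log (r (Z ω))) P ↔
      Integrable (fun q => r (T q) * Real.log (r (T q))) ρ := by
  calc Integrable (fun ω => Real.log (r (Z ω))) P
    _ ↔ Integrable (fun x => Real.log (r x)) (P.map Z) :=
      (integrable_map_measure hr.log.aestronglyMeasurable hZ).symm
    _ ↔ Integrable (fun x => r x * Real.log (r x)) (ρ.map T) := by
      rw [hlaw]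
      exact integrable_withDensity_ofReal_iff hr hr_nonneg
    _ ↔ Integrable (fun q => r (T q) * Real.log (r (T q))) ρ :=
      integrable_map_measure (hr.mul hr.log).aestronglyMeasurable hT

theorem integral_log_comp_eq_integral_mul_log_comp (hZ : AEMeasurable Z P)
    (hT : AEMeasurable T ρ) (hr : Measurable r) (hr_nonneg : ∀ x, 0 ≤ r x)
    (hlaw : P.map Z = (ρ.map T).withDensity fun x => ENNReal.ofReal (r x)) :
    ∫ ω, Real.log (r (Z ω)) ∂P = ∫ q, r (T q) * Real.log (r (T q)) ∂ρ := by
  calc ∫ ω, Real.log (r (Z ω)) ∂P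
    _ = ∫ x, Real.log (r x) ∂P.map Z :=
      (integral_map hZ hr.log.aestronglyMeasurable).symm
    _ = ∫ x, r x * Real.log (r x) ∂ρ.map T := by
      rw [hlaw]
      exact integral_withDensity_ofReal hr hr_nonneg _
    _ = ∫ q, r (T q) * Real.log (r (T q)) ∂ρ :=
      integral_map hT (hr.mul hr.log).aestronglyMeasurable

end ChangeOfVariables

section Quantile

theorem monotoneOn_of_rightInvOn_of_monotone {α β : Type*} [LinearOrder α] [LinearOrder β]
    {F : α → β} {Q : β → α} {s : Set β} (hF : Monotone F) (hQ : RightInvOn Q F s) :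
    MonotoneOn Q s := by
  intro u hu v hv huv
  by_contra! hlt
  have hvu : v ≤ u := by simpa only [hQ hu, hQ hv] using hF hlt.le
  exact hlt.ne (congrArg Q (hvu.antisymm huv))

variable {μ ν : Measure ℝ} {Q R : ℝ → ℝ}

theorem aemeasurable_of_rightInvOn_cdf (hQ : RightInvOn Q (cdf μ) (Ioo 0 1)) :
    AEMeasurable Q (volume.restrict (Ioo 0 1)) :=
  aemeasurable_restrict_of_monotoneOn measurableSet_Ioo
    (monotoneOn_of_rightInvOn_of_monotone (monotone_cdf μ) hQ)

theorem volume_preimage_Iic_inter_Ioo_of_rightInvOn_cdf (hQ : RightInvOn Q (cdf μ) (Ioo 0 1))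
    (x : ℝ) : volume (Q ⁻¹' Iic x ∩ Ioo 0 1) = ENNReal.ofReal (cdf μ x) := by
  have hlower : Ioo 0 (cdf μ x) ⊆ Q ⁻¹' Iic x ∩ Ioo 0 1 := by
    intro u hu
    have hu01 : u ∈ Ioo (0 : ℝ) 1 := ⟨hu.1, hu.2.trans_le (cdf_le_one μ x)⟩
    have hlt : cdf μ (Q u) < cdf μ x := (hQ hu01).trans_lt hu.2
    exact ⟨((monotone_cdf μ).reflect_lt hlt).le, hu01⟩
  have hupper : Q ⁻¹' Iic x ∩ Ioo 0 1 ⊆ Ioc 0 (cdf μ x) := fun u hu =>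
    ⟨hu.2.1, (hQ hu.2).symm.trans_le (monotone_cdf μ hu.1)⟩
  apply le_antisymm
  · simpa using measure_mono (μ := volume) hupper
  · simpa using measure_mono (μ := volume) hlower

theorem map_restrict_Ioo_of_rightInvOn_cdf [IsProbabilityMeasure μ]
    (hQ : RightInvOn Q (cdf μ) (Ioo 0 1)) : (volume.restrict (Ioo 0 1)).map Q = μ := by
  refine Measure.ext_of_Iic _ _ fun x => ?_
  rw [Measure.map_apply_of_aemeasurable (aemeasurable_of_rightInvOn_cdf hQ) measurableSet_Iic,
    Measure.restrict_apply' measurableSet_Ioo, volume_preimage_Iic_inter_Ioo_of_rightInvOn_cdf hQ,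
    ofReal_cdf]

theorem aemeasurable_prodMap_of_rightInvOn_cdf
    (hQ : RightInvOn Q (cdf μ) (Ioo 0 1)) (hR : RightInvOn R (cdf ν) (Ioo 0 1)) :
    AEMeasurable (Prod.map Q R) (volume.restrict (Ioo (0 : ℝ) 1 ×ˢ Ioo (0 : ℝ) 1)) := by
  rw [Measure.volume_eq_prod, ← Measure.prod_restrict]
  exact (aemeasurable_of_rightInvOn_cdf hQ).comp_fst.prodMk
    (aemeasurable_of_rightInvOn_cdf hR).comp_snd

theorem map_restrict_unit_square_of_rightInvOn_cdf
    [IsProbabilityMeasure μ] [IsProbabilityMeasure ν]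
    (hQ : RightInvOn Q (cdf μ) (Ioo 0 1)) (hR : RightInvOn R (cdf ν) (Ioo 0 1)) :
    (volume.restrict (Ioo (0 : ℝ) 1 ×ˢ Ioo (0 : ℝ) 1)).map (Prod.map Q R) = μ.prod ν := by
  rw [Measure.volume_eq_prod, ← Measure.prod_restrict,
    ← prod_map_eq_map_prodMap_of_aemeasurable (aemeasurable_of_rightInvOn_cdf hQ)
      (aemeasurable_of_rightInvOn_cdf hR),
    map_restrict_Ioo_of_rightInvOn_cdf hQ, map_restrict_Ioo_of_rightInvOn_cdf hR]

theorem cdf_map_apply {Ω : Type*} [MeasurableSpace Ω] {P : Measure Ω} [IsProbabilityMeasure P]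
    {X : Ω → ℝ} (hX : AEMeasurable X P) (x : ℝ) :
    cdf (P.map X) x = (P {ω | X ω ≤ x}).toReal := by
  have := Measure.isProbabilityMeasure_map hX
  rw [cdf_eq_real, measureReal_def, Measure.map_apply_of_aemeasurable hX measurableSet_Iic]
  rfl

end Quantile

theorem mi_eq_neg_copula_entropy_general {Ω : Type*} [MeasurableSpace Ω]
    (P : Measure Ω) [IsProbabilityMeasure P]
    (X Y : Ω → ℝ) (hX : AEMeasurable X P) (hY : AEMeasurable Y P)
    (fXY : ℝ × ℝ → ℝ) (hfXY_meas : Measurable fXY) (hfXY_nonneg : ∀ p, 0 ≤ fXY p)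
    (hjoint : Measure.map (fun ω => (X ω, Y ω)) P
      = volume.withDensity (fun p => ENNReal.ofReal (fXY p)))
    (fX fY : ℝ → ℝ) (hfX_meas : Measurable fX) (hfY_meas : Measurable fY)
    (hfX_nonneg : ∀ x, 0 ≤ fX x) (hfY_nonneg : ∀ y, 0 ≤ fY y)
    (hmargX : Measure.map X P = volume.withDensity (fun x => ENNReal.ofReal (fX x)))
    (hmargY : Measure.map Y P = volume.withDensity (fun y => ENNReal.ofReal (fY y)))
    (FX FY : ℝ → ℝ)
    (hFX : ∀ x, FX x = (P {ω | X ω ≤ x}).toReal)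
    (hFY : ∀ y, FY y = (P {ω | Y ω ≤ y}).toReal)
    (FXinv FYinv : ℝ → ℝ)
    (hFXinv : ∀ u ∈ Ioo (0 : ℝ) 1, FX (FXinv u) = u)
    (hFYinv : ∀ v ∈ Ioo (0 : ℝ) 1, FY (FYinv v) = v)
    (hMI_int : Integrable
      (fun ω => Real.log (fXY (X ω, Y ω) / (fX (X ω) * fY (Y ω)))) P) :
    IntegrableOn
      (fun q : ℝ × ℝ => (fXY (FXinv q.1, FYinv q.2) / (fX (FXinv q.1) * fY (FYinv q.2)))
        * Real.log (fXY (FXinv q.1, FYinv q.2) / (fX (FXinv q.1) * fY (FYinv q.2))))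
      (Ioo (0 : ℝ) 1 ×ˢ Ioo (0 : ℝ) 1) ∧
    ∫ ω, Real.log (fXY (X ω, Y ω) / (fX (X ω) * fY (Y ω))) ∂P
      = ∫ q in Ioo (0 : ℝ) 1 ×ˢ Ioo (0 : ℝ) 1,
          (fXY (FXinv q.1, FYinv q.2) / (fX (FXinv q.1) * fY (FYinv q.2)))
            * Real.log (fXY (FXinv q.1, FYinv q.2) / (fX (FXinv q.1) * fY (FYinv q.2))) := by
  have hPX : IsProbabilityMeasure (P.map X) := Measure.isProbabilityMeasure_map hX
  have hPY : IsProbabilityMeasure (P.map Y) := Measure.isProbabilityMeasure_map hY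
  have hQX : RightInvOn FXinv (cdf (P.map X)) (Ioo 0 1) := fun u hu => by
    rw [cdf_map_apply hX, ← hFX, hFXinv u hu]
  have hQY : RightInvOn FYinv (cdf (P.map Y)) (Ioo 0 1) := fun v hv => by
    rw [cdf_map_apply hY, ← hFY, hFYinv v hv]
  let ratio : ℝ × ℝ → ℝ := fun p => fXY p / (fX p.1 * fY p.2)
  have hratio_meas : Measurable ratio := by fun_prop
  have hratio_nonneg : ∀ p, 0 ≤ ratio p := fun p =>
    div_nonneg (hfXY_nonneg p) (mul_nonneg (hfX_nonneg p.1) (hfY_nonneg p.2))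
  have hlaw := map_prodMk_eq_withDensity_div hX hY hfXY_meas hfX_meas hfY_meas
    hjoint hmargX hmargY
  rw [← map_restrict_unit_square_of_rightInvOn_cdf hQX hQY] at hlaw
  have hQ_meas := aemeasurable_prodMap_of_rightInvOn_cdf hQX hQY
  exact ⟨(integrable_log_comp_iff_integrable_mul_log_comp (hX.prodMk hY) hQ_meas
      hratio_meas hratio_nonneg hlaw).1 hMI_int,
    integral_log_comp_eq_integral_mul_log_comp (hX.prodMk hY) hQ_meas
      hratio_meas hratio_nonneg hlaw⟩

/-- Mutual information equals the negative differential entropy of the copula density: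
`MI(X,Y) = E[log(f_XY(X,Y)/(f_X(X) f_Y(Y)))] = ∫_{(0,1)²} c(u,v) log c(u,v) du dv`, where
`c(u,v) = f_XY(F_X⁻¹(u), F_Y⁻¹(v)) / (f_X(F_X⁻¹(u)) f_Y(F_Y⁻¹(v)))`. -/
theorem mi_eq_neg_copula_entropy {Ω : Type*} [MeasurableSpace Ω]
    (P : Measure Ω) [IsProbabilityMeasure P]
    (X Y : Ω → ℝ) (hX : Measurable X) (hY : Measurable Y)
    (fXY : ℝ × ℝ → ℝ) (hfXY_meas : Measurable fXY) (hfXY_nonneg : ∀ p, 0 ≤ fXY p)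
    (hjoint : Measure.map (fun ω => (X ω, Y ω)) P
      = volume.withDensity (fun p => ENNReal.ofReal (fXY p)))
    (fX fY : ℝ → ℝ) (hfX_meas : Measurable fX) (hfY_meas : Measurable fY)
    (hfX_pos : ∀ x, 0 < fX x) (hfY_pos : ∀ y, 0 < fY y)
    (hmargX : Measure.map X P = volume.withDensity (fun x => ENNReal.ofReal (fX x)))
    (hmargY : Measure.map Y P = volume.withDensity (fun y => ENNReal.ofReal (fY y)))
    (FX FY : ℝ → ℝ)
    (hFX : ∀ x, FX x = (P {ω | X ω ≤ x}).toReal)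
    (hFY : ∀ y, FY y = (P {ω | Y ω ≤ y}).toReal)
    (FXinv FYinv : ℝ → ℝ)
    (hFXinv_left : ∀ x, FXinv (FX x) = x)
    (hFYinv_left : ∀ y, FYinv (FY y) = y)
    (hFXinv_right : ∀ u ∈ Ioo (0 : ℝ) 1, FX (FXinv u) = u)
    (hFYinv_right : ∀ v ∈ Ioo (0 : ℝ) 1, FY (FYinv v) = v)
    (hMI_int : Integrable
      (fun ω => Real.log (fXY (X ω, Y ω) / (fX (X ω) * fY (Y ω)))) P) :
    ∫ ω, Real.log (fXY (X ω, Y ω) / (fX (X ω) * fY (Y ω))) ∂P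
      = ∫ q in Ioo (0 : ℝ) 1 ×ˢ Ioo (0 : ℝ) 1,
          (fXY (FXinv q.1, FYinv q.2) / (fX (FXinv q.1) * fY (FYinv q.2)))
            * Real.log (fXY (FXinv q.1, FYinv q.2) / (fX (FXinv q.1) * fY (FYinv q.2))) := by
  exact (mi_eq_neg_copula_entropy_general P X Y hX.aemeasurable hY.aemeasurable fXY hfXY_meas
    hfXY_nonneg hjoint fX fY hfX_meas hfY_meas (fun x => (hfX_pos x).le) (fun y => (hfY_pos y).le)
    hmargX hmargY FX FY hFX hFY FXinv FYinv hFXinv_right hFYinv_right hMI_int).2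

end
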